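/- Let 𝒫 and 𝒬 be distinct type systems on Ω that are both multinuclear and simple. Then Stab_V(𝒫) ≠ Stab_V(𝒬). -/

import Mathlib

/-!
The key fact is that, for multinuclear type systems `r` and `s`, if `StabSet r ⊆ StabSet s` then
`s` is a quotient of `r` (`sub_of_stab_sub`). Simplicity of `r` then forces `s = r`, because `s`,
being simple too, is not universal.

For incomparable addresses `a ∼ᵣ b`, the element of `V` exchanging the cones of `a` and `b` by
prefix substitution stabilizes `r`, hence `s`. If the `s`-nucleus containing `a` also contains an
address `d` incomparable to `a` and `b`, then every deep descendant `aη` is `s`-equivalent to some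
deep descendant of `d`, which the swap fixes; as the swap sends `aη` to `bη`, this gives
`aη ∼ₛ bη`, and `a ∼ₛ b` since `s` is reduced (`swap_step`). Such a `d` exists once `a` and `b` are
replaced by `aγx` and `bγx` with `γ` long: the sibling of `aγx` serves, so reducedness gives
`a ∼ₛ b` in general (`incomparable_step`).

If `a ∼ᵣ b` are comparable, say `b = aγ`, then for a long word `η'x` the sibling of `aη'x` lies in
the same `r`-nucleus and so has a descendant `c` that is `r`-equivalent to `aη'x` and to `bη'x`.
If `aη'x` and `bη'x` are comparable then `c` is incomparable to both, and the incomparable case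
applies twice (`comparable_step`).
-/

/-! ### Type systems and stabilizers -/

/-- Addresses: finite words over the alphabet `{0,1}` (`Bool`). -/
abbrev Addr : Type := List Bool

/-- Cantor space: infinite words over the alphabet `{0,1}`. -/
abbrev Cantor : Type := ℕ → Bool

/-- Prepend the finite word `α` to the infinite word `w`. -/
def wcat (α : Addr) (w : Cantor) : Cantor := fun n =>
  if h : n < α.length then α.get ⟨n, h⟩ else w (n - α.length)

/-- The cone of the address `α`: the set of infinite words having `α` as a prefix. -/
def cone (α : Addr) : Set Cantor := Set.range (wcat α)

/-- `g` is a prefix substitution map: there are partitions of Cantor space into cones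
`(A i)𝔠` and `(B i)𝔠` such that `g` maps `(A i) w` to `(B i) w`. -/
def IsPrefixSubst (g : Equiv.Perm Cantor) : Prop :=
  ∃ (n : ℕ) (A B : Fin n → Addr),
    (∀ i j, i ≠ j → Disjoint (cone (A i)) (cone (A j))) ∧
    (⋃ i, cone (A i)) = Set.univ ∧
    (∀ i j, i ≠ j → Disjoint (cone (B i)) (cone (B j))) ∧
    (⋃ i, cone (B i)) = Set.univ ∧
    (∀ i w, g (wcat (A i) w) = wcat (B i) w)

/-- Thompson's group `V`, as the set of prefix substitution maps inside `Equiv.Perm Cantor`. -/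
def VSet : Set (Equiv.Perm Cantor) := { g | IsPrefixSubst g }

/-- `α ^ g = β` : `g` maps the cone of `α` onto the cone of `β` by the prefix
substitution `α ↦ β`. -/
def actsOn (g : Equiv.Perm Cantor) (α β : Addr) : Prop :=
  ∀ w, g (wcat α w) = wcat β w

/-- A subset of `Equiv.Perm Cantor` that is closed under the group operations. -/
def IsSubgroupSet (M : Set (Equiv.Perm Cantor)) : Prop :=
  (1 : Equiv.Perm Cantor) ∈ M ∧ (∀ g ∈ M, ∀ h ∈ M, g * h ∈ M) ∧ ∀ g ∈ M, g⁻¹ ∈ M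

/-- `M` is a maximal subgroup of Thompson's group `V`. -/
def IsMaximalSubgroupOfV (M : Set (Equiv.Perm Cantor)) : Prop :=
  IsSubgroupSet M ∧ M ⊆ VSet ∧ M ≠ VSet ∧
    ∀ H : Set (Equiv.Perm Cantor),
      IsSubgroupSet H → M ⊆ H → H ⊆ VSet → H = M ∨ H = VSet

/-- A relation on addresses is coherent if `α ∼ β` implies `α0 ∼ β0` and `α1 ∼ β1`. -/
def Coherent (r : Addr → Addr → Prop) : Prop :=
  ∀ α β, r α β → r (α ++ [false]) (β ++ [false]) ∧ r (α ++ [true]) (β ++ [true])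

/-- A relation on addresses is reduced if `α0 ∼ β0` and `α1 ∼ β1` imply `α ∼ β`. -/
def Reduced (r : Addr → Addr → Prop) : Prop :=
  ∀ α β, r (α ++ [false]) (β ++ [false]) → r (α ++ [true]) (β ++ [true]) → r α β

/-- A type system: a coherent and reduced equivalence relation on addresses
(identified with the partition of `Ω` into its classes). -/
def IsTypeSystem (r : Addr → Addr → Prop) : Prop :=
  Equivalence r ∧ Coherent r ∧ Reduced r

/-- `g` fixes the parts of `r`: for all but finitely many addresses `α`, the image
`α ^ g` is defined and equivalent to `α`. -/
def FixesParts (r : Addr → Addr → Prop) (g : Equiv.Perm Cantor) : Prop :=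
  { α : Addr | ¬ ∃ β, actsOn g α β ∧ r α β }.Finite

/-- `g` stabilizes `r`: on some cofinite set of addresses, `α ^ g` is defined and `g`
preserves equivalence and inequivalence of addresses. -/
def Stabilizes (r : Addr → Addr → Prop) (g : Equiv.Perm Cantor) : Prop :=
  ∃ Ω₀ : Set Addr, Ω₀ᶜ.Finite ∧ (∀ α ∈ Ω₀, ∃ β, actsOn g α β) ∧
    ∀ α ∈ Ω₀, ∀ α' ∈ Ω₀, ∀ β β', actsOn g α β → actsOn g α' β' → (r α α' ↔ r β β')

/-- `Fix_V(𝒫)`: the elements of Thompson's group `V` fixing the parts of `r`. -/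
def FixSet (r : Addr → Addr → Prop) : Set (Equiv.Perm Cantor) :=
  { g | IsPrefixSubst g ∧ FixesParts r g }

/-- `Stab_V(𝒫)`: the elements of Thompson's group `V` stabilizing `r`. -/
def StabSet (r : Addr → Addr → Prop) : Set (Equiv.Perm Cantor) :=
  { g | IsPrefixSubst g ∧ Stabilizes r g }

/-- The type system of `s` is a quotient of that of `r`. -/
def IsQuotientOf (s r : Addr → Addr → Prop) : Prop :=
  IsTypeSystem s ∧ ∀ α β, r α β → s α β

/-- A simple type system: the universal relation is a proper quotient, and every
quotient is either the type system itself or the universal one. -/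
def SimpleTS (r : Addr → Addr → Prop) : Prop :=
  IsTypeSystem r ∧ (∃ α β : Addr, ¬ r α β) ∧
    ∀ s : Addr → Addr → Prop, IsQuotientOf s r →
      (∀ α β, s α β ↔ r α β) ∨ ∀ α β, s α β

/-- The type (equivalence class) of the address `α`. -/
def typeOf (r : Addr → Addr → Prop) (α : Addr) : Set Addr := { β | r α β }

/-- `S` is a union of `r`-classes, i.e. a set of types of the type system. -/
def Saturated (r : Addr → Addr → Prop) (S : Set Addr) : Prop :=
  ∀ α ∈ S, ∀ β, r α β → β ∈ S

/-- `S` is child-closed: with each address (type) it contains both of its children. -/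
def ChildClosed (S : Set Addr) : Prop :=
  ∀ α ∈ S, α ++ [false] ∈ S ∧ α ++ [true] ∈ S

/-- The word `γ` determines a path through `S` from (the type of) `α`. -/
def PathThrough (S : Set Addr) (α γ : Addr) : Prop :=
  ∀ ζ : Addr, ζ <+: γ → α ++ ζ ∈ S

/-- `S` is strongly connected. -/
def StronglyConnected (r : Addr → Addr → Prop) (S : Set Addr) : Prop :=
  ∀ α ∈ S, ∀ β ∈ S, ∃ γ : Addr, γ ≠ [] ∧ PathThrough S α γ ∧ r (α ++ γ) β

/-- A nucleus: a (nonempty) child-closed and strongly connected set of types. -/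
def IsNucleus (r : Addr → Addr → Prop) (S : Set Addr) : Prop :=
  S.Nonempty ∧ Saturated r S ∧ ChildClosed S ∧ StronglyConnected r S

/-- `S` consists of exactly one type. -/
def IsSingleType (r : Addr → Addr → Prop) (S : Set Addr) : Prop :=
  ∃ α : Addr, S = typeOf r α

/-- A multinuclear type system: finitely many pairwise disjoint nuclei containing the
types of all sufficiently long addresses. -/
def Multinuclear (r : Addr → Addr → Prop) : Prop :=
  ∃ (k : ℕ) (Q : Fin k → Set Addr), 0 < k ∧ (∀ i, IsNucleus r (Q i)) ∧
    (∀ i j, i ≠ j → Disjoint (Q i) (Q j)) ∧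
    ∃ t : ℕ, 0 < t ∧ ∀ α : Addr, t ≤ α.length → ∃ i, α ∈ Q i

/-- A nuclear type system: a single nucleus containing the types of all sufficiently
long addresses. -/
def Nuclear (r : Addr → Addr → Prop) : Prop :=
  ∃ Q : Set Addr, IsNucleus r Q ∧ ∃ t : ℕ, 0 < t ∧ ∀ α : Addr, t ≤ α.length → α ∈ Q

/-- An atomic binuclear type system: two disjoint singleton nuclei containing the types
of all sufficiently long addresses. -/
def AtomicBinuclear (r : Addr → Addr → Prop) : Prop :=
  ∃ Q₁ Q₂ : Set Addr, IsNucleus r Q₁ ∧ IsNucleus r Q₂ ∧ Disjoint Q₁ Q₂ ∧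
    IsSingleType r Q₁ ∧ IsSingleType r Q₂ ∧
    ∃ t : ℕ, 0 < t ∧ ∀ α : Addr, t ≤ α.length → α ∈ Q₁ ∪ Q₂

/-- The data `(𝒬, ℛ)` witnessing that a type system is quasinuclear. -/
def QuasinuclearData (r : Addr → Addr → Prop) (Q R : Set Addr) : Prop :=
  Q.Nonempty ∧ R.Nonempty ∧ Saturated r Q ∧ Saturated r R ∧ Disjoint Q R ∧
    (∃ t : ℕ, 0 < t ∧ ∀ α : Addr, t ≤ α.length → α ∈ Q ∪ R) ∧
    IsNucleus r R ∧ StronglyConnected r Q ∧ ChildClosed (Q ∪ R) ∧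
    ∀ α ∈ Q, ∀ β ∈ R, ∃ γ : Addr, r (α ++ γ) β

/-- A quasinuclear type system. -/
def Quasinuclear (r : Addr → Addr → Prop) : Prop :=
  ∃ Q R : Set Addr, QuasinuclearData r Q R

/-- `𝒬†`: the types of `𝒬` both of whose children lie in `𝒬`. -/
def QDagger (Q : Set Addr) : Set Addr :=
  { α ∈ Q | α ++ [false] ∈ Q ∧ α ++ [true] ∈ Q }

/-- An atomic quasinuclear type system: the nucleus `ℛ` is a single type. -/
def AtomicQuasinuclear (r : Addr → Addr → Prop) : Prop :=
  ∃ Q R : Set Addr, QuasinuclearData r Q R ∧ IsSingleType r R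

/-! ### Words and cones -/

lemma wcat_nil (w : Cantor) : wcat [] w = w := by
  funext n; simp [wcat]

lemma wcat_cons_zero (x : Bool) (a : Addr) (w : Cantor) : wcat (x :: a) w 0 = x := by
  simp [wcat]

lemma wcat_cons_succ (x : Bool) (a : Addr) (w : Cantor) (n : ℕ) :
    wcat (x :: a) w (n + 1) = wcat a w n := by
  simp [wcat]

lemma wcat_cons_inj {x y : Bool} {a b : Addr} {w v : Cantor}
    (h : wcat (x :: a) w = wcat (y :: b) v) : x = y ∧ wcat a w = wcat b v := by
  refine ⟨?_, ?_⟩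
  · have := congrFun h 0
    simpa only [wcat_cons_zero] using this
  · funext n
    have := congrFun h (n + 1)
    simpa only [wcat_cons_succ] using this

lemma wcat_append (a b : Addr) (w : Cantor) : wcat (a ++ b) w = wcat a (wcat b w) := by
  induction a with
  | nil => simp [wcat_nil]
  | cons x a ih =>
    funext n
    cases n with
    | zero => simp only [List.cons_append, wcat_cons_zero]
    | succ n => simp only [List.cons_append, wcat_cons_succ, ih]

lemma wcat_injective (a : Addr) : Function.Injective (wcat a) := by
  induction a with
  | nil => intro w v h; simpa [wcat_nil] using h
  | cons x a ih => intro w v h; exact ih (wcat_cons_inj h).2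

/-- Two addresses are incomparable if neither is a prefix of the other. -/
def Incomp (a b : Addr) : Prop := ¬ a <+: b ∧ ¬ b <+: a

lemma Incomp.symm {a b : Addr} (h : Incomp a b) : Incomp b a := ⟨h.2, h.1⟩

lemma prefix_or_of_wcat_eq {a b : Addr} {w v : Cantor} (h : wcat a w = wcat b v) :
    a <+: b ∨ b <+: a := by
  induction a generalizing b with
  | nil => exact Or.inl List.nil_prefix
  | cons x a ih =>
    cases b with
    | nil => exact Or.inr List.nil_prefix
    | cons y b =>
      obtain ⟨rfl, h'⟩ := wcat_cons_inj h
      rcases ih h' with h1 | h1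
      · exact Or.inl ((List.prefix_cons_inj x).2 h1)
      · exact Or.inr ((List.prefix_cons_inj x).2 h1)

lemma Incomp.append {a b : Addr} (h : Incomp a b) (c d : Addr) : Incomp (a ++ c) (b ++ d) := by
  have key : ∀ {a b : Addr} (c d : Addr), Incomp a b → ¬ (a ++ c) <+: (b ++ d) := by
    intro a b c d h hp
    rcases List.prefix_or_prefix_of_prefix ((List.prefix_append a c).trans hp)
      (List.prefix_append b d) with h1 | h1
    · exact h.1 h1
    · exact h.2 h1
  exact ⟨key c d h, key d c h.symm⟩

lemma Incomp.append_right {a b : Addr} (h : Incomp a b) (d : Addr) : Incomp a (b ++ d) := by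
  simpa using h.append [] d

lemma incomp_siblings (a : Addr) (x : Bool) : Incomp (a ++ [x]) (a ++ [!x]) := by
  constructor <;> rw [List.prefix_append_right_inj] <;> cases x <;> simp

/-- The image address `α ^ g` is unique. -/
lemma actsOn_unique {g : Equiv.Perm Cantor} {a b c : Addr} (hb : actsOn g a b)
    (hc : actsOn g a c) : b = c := by
  -- If `c` properly extended `b`, then `w = wcat γ w` for all `w`, with `γ` nonempty; a word `w`
  -- whose first letter differs from that of `γ` refutes this.
  have key : ∀ {b c : Addr}, actsOn g a b → actsOn g a c → b <+: c → b = c := by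
    rintro b c hb hc ⟨γ, rfl⟩
    cases γ with
    | nil => simp
    | cons x γ =>
      have h1 := (hb fun _ => !x).symm.trans (hc _)
      rw [wcat_append] at h1
      have h2 := congrFun (wcat_injective b h1) 0
      rw [wcat_cons_zero] at h2
      cases x <;> simp at h2
  rcases prefix_or_of_wcat_eq ((hb fun _ => true).symm.trans (hc _)) with h | h
  · exact key hb hc h
  · exact (key hc hb h).symm

lemma exists_wcat (N : ℕ) (w : Cantor) : ∃ a : Addr, a.length = N ∧ ∃ v, w = wcat a v := by
  induction N with
  | zero => exact ⟨[], rfl, w, (wcat_nil w).symm⟩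
  | succ N ih =>
    obtain ⟨a, ha, v, rfl⟩ := ih
    refine ⟨a ++ [v 0], by simp [ha], fun n => v (n + 1), ?_⟩
    rw [wcat_append]
    congr 1
    funext n
    cases n with
    | zero => rw [wcat_cons_zero]
    | succ n => rw [wcat_cons_succ, wcat_nil]

/-- A permutation acting by prefix substitution on every address of some fixed length is in `V`. -/
lemma isPrefixSubst_of_level (g : Equiv.Perm Cantor) (N : ℕ)
    (h : ∀ a : Addr, a.length = N → ∃ b, actsOn g a b) : IsPrefixSubst g := by
  have hfin : Finite {a : Addr // a.length = N} := (List.finite_length_eq Bool N).to_subtype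
  obtain ⟨n, ⟨e⟩⟩ := Finite.exists_equiv_fin {a : Addr // a.length = N}
  choose f hf using h
  have hA : ∀ i j, i ≠ j → Disjoint (cone (e.symm i).1) (cone (e.symm j).1) := by
    intro i j hij
    rw [Set.disjoint_left]
    rintro _ ⟨w, rfl⟩ ⟨v, hv⟩
    apply hij
    apply e.symm.injective
    apply Subtype.ext
    have hl : (e.symm i).1.length = (e.symm j).1.length :=
      (e.symm i).2.trans (e.symm j).2.symm
    rcases prefix_or_of_wcat_eq hv with h1 | h1
    · exact (h1.eq_of_length hl.symm).symm
    · exact h1.eq_of_length hl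
  have hU : (⋃ i, cone (e.symm i).1) = Set.univ := by
    rw [Set.eq_univ_iff_forall]
    intro w
    obtain ⟨a, ha, v, rfl⟩ := exists_wcat N w
    refine Set.mem_iUnion.2 ⟨e ⟨a, ha⟩, ?_⟩
    simp [cone]
  have himg : ∀ i, cone (f (e.symm i).1 (e.symm i).2) = g '' cone (e.symm i).1 := by
    intro i
    rw [cone, cone, ← Set.range_comp]
    congr 1
    funext w
    exact (hf _ _ w).symm
  refine ⟨n, fun i => (e.symm i).1, fun i => f (e.symm i).1 (e.symm i).2, hA, hU, ?_, ?_,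
    fun i w => hf _ _ w⟩
  · intro i j hij
    simp only [himg]
    exact (Set.disjoint_image_iff g.injective).2 (hA i j hij)
  · simp only [himg]
    rw [← Set.image_iUnion, hU, Set.image_univ, g.surjective.range_eq]

/-! ### Swaps of two cones -/

/-- There is a permutation exchanging two disjoint cones by prefix substitution and fixing the rest
of Cantor space, described by its action on addresses. -/
lemma exists_coneSwap {a b : Addr} (hab : Incomp a b) : ∃ g : Equiv.Perm Cantor,
    actsOn g a b ∧ actsOn g b a ∧ ∀ d, Incomp d a → Incomp d b → actsOn g d d := by
  classical
  let F : Cantor → Cantor := fun w =>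
    if h : w ∈ cone a then wcat b h.choose
    else if h : w ∈ cone b then wcat a h.choose else w
  have hnot : ∀ {c d : Addr}, Incomp c d → ∀ w, wcat c w ∉ cone d := by
    rintro c d h w ⟨v, hv⟩
    rcases prefix_or_of_wcat_eq hv with h1 | h1
    · exact h.2 h1
    · exact h.1 h1
  have hFa : ∀ w, F (wcat a w) = wcat b w := by
    intro w
    have h : wcat a w ∈ cone a := ⟨w, rfl⟩
    simp only [F, dif_pos h]
    rw [wcat_injective a h.choose_spec]
  have hFb : ∀ w, F (wcat b w) = wcat a w := by
    intro w
    have h : wcat b w ∈ cone b := ⟨w, rfl⟩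
    simp only [F, dif_neg (hnot hab.symm w), dif_pos h]
    rw [wcat_injective b h.choose_spec]
  have hF : ∀ w, w ∉ cone a → w ∉ cone b → F w = w := by
    intro w h1 h2
    simp only [F, dif_neg h1, dif_neg h2]
  have hinv : Function.Involutive F := by
    intro w
    by_cases h1 : w ∈ cone a
    · obtain ⟨v, rfl⟩ := h1
      rw [hFa, hFb]
    · by_cases h2 : w ∈ cone b
      · obtain ⟨v, rfl⟩ := h2
        rw [hFb, hFa]
      · rw [hF w h1 h2, hF w h1 h2]
  exact ⟨hinv.toPerm, hFa, hFb, fun d h1 h2 w => hF _ (hnot h1 w) (hnot h2 w)⟩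

lemma actsOn_append {g : Equiv.Perm Cantor} {a b : Addr} (h : actsOn g a b) (c : Addr) :
    actsOn g (a ++ c) (b ++ c) := by
  intro w
  rw [wcat_append, wcat_append, h]

lemma coherent_append {r : Addr → Addr → Prop} (hr : IsTypeSystem r) {a b : Addr} (h : r a b)
    (c : Addr) : r (a ++ c) (b ++ c) := by
  induction c generalizing a b with
  | nil => simpa using h
  | cons x c ih =>
    have h1 : r (a ++ [x]) (b ++ [x]) := by
      cases x
      · exact (hr.2.1 a b h).1
      · exact (hr.2.1 a b h).2
    simpa using ih h1

/-- Iterated reducedness: equivalence can be tested on the descendants at a fixed depth. -/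
lemma reduced_level {r : Addr → Addr → Prop} (hr : IsTypeSystem r) (n : ℕ) {a b : Addr}
    (h : ∀ c : Addr, c.length = n → r (a ++ c) (b ++ c)) : r a b := by
  induction n generalizing a b with
  | zero => simpa using h [] rfl
  | succ n ih =>
    apply hr.2.2 <;> apply ih <;> intro c hc
    · simpa using h (false :: c) (by simp [hc])
    · simpa using h (true :: c) (by simp [hc])

/-- A swap of two equivalent cones stabilizes the type system; in fact it fixes the type of every
address that is long enough. -/
lemma swap_mem_stab {r : Addr → Addr → Prop} (hr : IsTypeSystem r) {a b : Addr}
    (h : r a b) {g : Equiv.Perm Cantor} (hga : actsOn g a b) (hgb : actsOn g b a)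
    (hg : ∀ d, Incomp d a → Incomp d b → actsOn g d d) : g ∈ StabSet r := by
  set N := max a.length b.length with hN
  have hact : ∀ d : Addr, N ≤ d.length → ∃ c, actsOn g d c ∧ r d c := by
    intro d hd
    have hpre : ∀ {e : Addr}, e.length ≤ N → d <+: e → e <+: d := by
      intro e he hde
      rw [hde.eq_of_length (le_antisymm hde.length_le (he.trans hd))]
    by_cases h1 : a <+: d
    · obtain ⟨c, rfl⟩ := h1
      exact ⟨b ++ c, actsOn_append hga c, coherent_append hr h c⟩
    by_cases h2 : b <+: d
    · obtain ⟨c, rfl⟩ := h2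
      exact ⟨a ++ c, actsOn_append hgb c, coherent_append hr (hr.1.symm h) c⟩
    exact ⟨d, hg d ⟨fun hh => h1 (hpre (le_max_left _ _) hh), h1⟩
      ⟨fun hh => h2 (hpre (le_max_right _ _) hh), h2⟩, hr.1.refl d⟩
  refine ⟨isPrefixSubst_of_level g N fun d hd => ?_, {d | N ≤ d.length}, ?_, ?_, ?_⟩
  · obtain ⟨c, hc, -⟩ := hact d hd.ge
    exact ⟨c, hc⟩
  · refine (List.finite_length_lt Bool N).subset ?_
    intro d hd
    simpa using hd
  · intro d hd
    obtain ⟨c, hc, -⟩ := hact d hd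
    exact ⟨c, hc⟩
  · intro d hd d' hd' c c' hc hc'
    obtain ⟨e, he, hre⟩ := hact d hd
    obtain ⟨e', he', hre'⟩ := hact d' hd'
    obtain rfl := actsOn_unique hc he
    obtain rfl := actsOn_unique hc' he'
    exact ⟨fun hh => hr.1.trans (hr.1.trans (hr.1.symm hre) hh) hre',
      fun hh => hr.1.trans (hr.1.trans hre hh) (hr.1.symm hre')⟩

/-! ### Nuclei -/

lemma childClosed_append {S : Set Addr} (hS : ChildClosed S) {a : Addr} (ha : a ∈ S) (c : Addr) :
    a ++ c ∈ S := by
  induction c generalizing a with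
  | nil => simpa using ha
  | cons x c ih =>
    have h1 : a ++ [x] ∈ S := by
      cases x
      · exact (hS a ha).1
      · exact (hS a ha).2
    simpa using ih h1

/-- Within a nucleus, every type occurs arbitrarily deep below every address. -/
lemma nucleus_deep {r : Addr → Addr → Prop} {S : Set Addr} (hS : IsNucleus r S) {a b : Addr}
    (ha : a ∈ S) (hb : b ∈ S) (n : ℕ) : ∃ c : Addr, n ≤ c.length ∧ r (a ++ c) b := by
  obtain ⟨γ, -, -, hγ⟩ := hS.2.2.2 _
    (childClosed_append hS.2.2.1 ha (List.replicate n false)) b hb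
  exact ⟨List.replicate n false ++ γ, by simp, by simpa using hγ⟩

lemma multinuclear_deep {r : Addr → Addr → Prop} (hr : Multinuclear r) :
    ∃ t : ℕ, ∀ α : Addr, t ≤ α.length → ∃ S, IsNucleus r S ∧ α ∈ S := by
  obtain ⟨k, Q, -, hQ, -, t, -, ht⟩ := hr
  refine ⟨t, fun α hα => ?_⟩
  obtain ⟨i, hi⟩ := ht α hα
  exact ⟨Q i, hQ i, hi⟩

/-! ### Comparison of two type systems -/

/-- The swap of `a` and `b` transports `s`-equivalence from `a` to `b`, provided the nucleus of `a`
is also present at an address `d` outside both cones. -/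
lemma swap_step {r s : Addr → Addr → Prop} (hr : IsTypeSystem r) (hs : IsTypeSystem s)
    (hsub : StabSet r ⊆ StabSet s) {S : Set Addr} (hS : IsNucleus s S) {a b d : Addr}
    (hab : Incomp a b) (hda : Incomp d a) (hdb : Incomp d b) (haS : a ∈ S) (hdS : d ∈ S)
    (h : r a b) : s a b := by
  obtain ⟨g, hga, hgb, hg⟩ := exists_coneSwap hab
  obtain ⟨-, Ω₀, hfin, -, hstab⟩ := hsub (swap_mem_stab hr h hga hgb hg)
  obtain ⟨M, hM⟩ := (hfin.image List.length).bddAbove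
  have hmem : ∀ c : Addr, M < c.length → c ∈ Ω₀ := by
    intro c hc
    by_contra hcon
    exact absurd (hM ⟨c, hcon, rfl⟩) (by simpa using hc)
  refine reduced_level hs (M + 1) fun c hc => ?_
  obtain ⟨e, he, hse⟩ := nucleus_deep hS hdS (childClosed_append hS.2.2.1 haS c) (M + 1)
  have h1 : actsOn g (d ++ e) (d ++ e) := actsOn_append (hg d hda hdb) e
  have h2 := (hstab (d ++ e) (hmem _ (by simp; omega)) (a ++ c) (hmem _ (by simp; omega))
    _ _ h1 (actsOn_append hga c)).1 hse
  exact hs.1.trans (hs.1.symm hse) h2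

lemma incomparable_step {r s : Addr → Addr → Prop} (hr : IsTypeSystem r) (hs : IsTypeSystem s)
    (hsm : Multinuclear s) (hsub : StabSet r ⊆ StabSet s) {a b : Addr} (hab : Incomp a b)
    (h : r a b) : s a b := by
  obtain ⟨t, ht⟩ := multinuclear_deep hsm
  refine reduced_level hs t fun c hc => ?_
  obtain ⟨S, hS, haS⟩ := ht (a ++ c) (by simp; omega)
  refine reduced_level hs 1 fun x' hx => ?_
  obtain ⟨x, rfl⟩ := List.length_eq_one_iff.1 hx
  have hac : Incomp (a ++ c) (b ++ c) := hab.append c c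
  exact swap_step hr hs hsub hS (d := a ++ c ++ [!x]) (hac.append [x] [x])
    (incomp_siblings _ x).symm (hac.append _ _)
    (childClosed_append hS.2.2.1 haS _) (childClosed_append hS.2.2.1 haS _)
    (coherent_append hr (coherent_append hr h c) [x])

lemma comparable_step {r s : Addr → Addr → Prop} (hr : IsTypeSystem r) (hs : IsTypeSystem s)
    (hrm : Multinuclear r) (hsm : Multinuclear s) (hsub : StabSet r ⊆ StabSet s) {a b : Addr}
    (hab : a <+: b) (h : r a b) : s a b := by
  obtain ⟨t, ht⟩ := multinuclear_deep hrm
  refine reduced_level hs t fun c hc => ?_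
  obtain ⟨S, hS, haS⟩ := ht (a ++ c) (by simp; omega)
  refine reduced_level hs 1 fun x' hx => ?_
  obtain ⟨x, rfl⟩ := List.length_eq_one_iff.1 hx
  have hr' : r (a ++ c ++ [x]) (b ++ c ++ [x]) :=
    coherent_append hr (coherent_append hr h c) [x]
  have hlen := hab.length_le
  by_cases hp : (a ++ c ++ [x]) <+: (b ++ c ++ [x])
  · -- The descendant `ac(!x)e` of the sibling of `acx` is equivalent to `acx`; it is incomparable to
    -- `acx`, hence also to the extension `bcx` of `acx`.
    obtain ⟨e, -, he⟩ := nucleus_deep hS (childClosed_append hS.2.2.1 haS [!x])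
      (childClosed_append hS.2.2.1 haS [x]) 0
    have h1 : Incomp (a ++ c ++ [x]) (a ++ c ++ [!x] ++ e) :=
      (incomp_siblings _ x).append_right e
    obtain ⟨q, hq⟩ := hp
    have h2 : Incomp (a ++ c ++ [!x] ++ e) (b ++ c ++ [x]) := by
      rw [← hq]
      exact h1.symm.append_right q
    exact hs.1.trans (incomparable_step hr hs hsm hsub h1 (hr.1.symm he))
      (incomparable_step hr hs hsm hsub h2 (hr.1.trans he hr'))
  · refine incomparable_step hr hs hsm hsub ⟨hp, fun hp' => hp ?_⟩ hr'
    have hlen' := hp'.length_le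
    rw [hp'.eq_of_length (by simp at hlen' ⊢; omega)]

lemma sub_of_stab_sub {r s : Addr → Addr → Prop} (hr : IsTypeSystem r) (hs : IsTypeSystem s)
    (hrm : Multinuclear r) (hsm : Multinuclear s) (hsub : StabSet r ⊆ StabSet s) (a b : Addr)
    (h : r a b) : s a b := by
  by_cases h1 : a <+: b
  · exact comparable_step hr hs hrm hsm hsub h1 h
  by_cases h2 : b <+: a
  · exact hs.1.symm (comparable_step hr hs hrm hsm hsub h2 (hr.1.symm h))
  exact incomparable_step hr hs hsm hsub ⟨h1, h2⟩ h

/-- **Statement 16.**  Distinct simple multinuclear type systems have distinct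
stabilizers in Thompson's group `V`. -/
theorem stabSet_injective_on_simple_multinuclear
    (r s : Addr → Addr → Prop) (hr : SimpleTS r) (hs : SimpleTS s)
    (hrm : Multinuclear r) (hsm : Multinuclear s) (hne : r ≠ s) :
    StabSet r ≠ StabSet s := by
  intro heq
  rcases hr.2.2 s ⟨hs.1, sub_of_stab_sub hr.1 hs.1 hrm hsm heq.subset⟩ with h | h
  · exact hne (funext fun a => funext fun b => propext (h a b).symm)
  · obtain ⟨a, b, hab⟩ := hs.2.1
    exact hab (h a b)
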